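/- arXiv:1007.2207 — 2 statements merged into one kernel-verified Lean document; each statement's English description precedes it below -/
import Mathlib

section
/- Let T be a hyperconvex metric space satisfying the four-point inequality (for example, a complete metric tree), X a real normed space, J : T → X an isometric embedding, and x̃ ∈ X. Let P(x̃) = {x₀ ∈ T : there exists a 1-Lipschitz map π : X → T with π(J(t)) = t for all t ∈ T and π(x̃) = x₀}. Then P(x̃) is a closed subset of T, and it is metrically convex: for all x₁, x₂ ∈ P(x̃) and every z ∈ T with d(x₁,z) + d(z,x₂) = d(x₁,x₂), one has z ∈ P(x̃). -/
/-- A metric space is hyperconvex if every family of mutually intersecting closed balls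
(`d(xᵢ,xⱼ) ≤ rᵢ + rⱼ`) has a common point. -/
def Hyperconvex (T : Type*) [MetricSpace T] : Prop :=
  ∀ (ι : Type*) (x : ι → T) (r : ι → ℝ), (∀ i, 0 ≤ r i) →
    (∀ i j, dist (x i) (x j) ≤ r i + r j) →
    (⋂ i, Metric.closedBall (x i) (r i)).Nonempty

/-!
If `π` is a `K`-Lipschitz retraction of `X` onto `J : T → X`, then `π x` lies in every closed ball
`B(t, K d(x, J t))`. Conversely, if `x₀` lies in all these balls, then the partial map `J t ↦ t`,
`x ↦ x₀` is `K`-Lipschitz, and Zorn's lemma together with one-point extensions, which exist by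
hyperconvexity, extends it to `X`. So the set of images is an intersection of closed balls, and
the four-point inequality makes closed balls metrically convex.

The index types in `Hyperconvex` come from a single universe, which need not contain `X` or `T`.
Under the four-point inequality countable families of balls suffice: given a point `p`, let `S` be
the supremum of `d(p, xᵢ) - rᵢ`. If `S < 0`, then `p` lies in every ball; otherwise a common
point of `B(p, S)` and of a sequence of balls along which the supremum is approached does.
-/

open Filter Metric Set
open scoped NNReal Topology

universe u v w

/-- The four-point inequality, i.e. `0`-hyperbolicity in the sense of Gromov: of the three ways to
split four points into two pairs, no single one has the strictly largest sum of distances. -/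
def FourPointInequality (T : Type*) [PseudoMetricSpace T] : Prop :=
  ∀ x₁ x₂ x₃ x₄ : T, dist x₁ x₂ + dist x₃ x₄ ≤
    max (dist x₁ x₃ + dist x₂ x₄) (dist x₁ x₄ + dist x₂ x₃)

/-- Metric convexity: the set contains the metric interval between any two of its points. -/
def MetricallyConvex {T : Type*} [PseudoMetricSpace T] (S : Set T) : Prop :=
  ∀ x₁ ∈ S, ∀ x₂ ∈ S, ∀ z : T, dist x₁ z + dist z x₂ = dist x₁ x₂ → z ∈ S

lemma MetricallyConvex.iInter {T : Type*} [PseudoMetricSpace T] {ι : Sort*} {S : ι → Set T}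
    (h : ∀ i, MetricallyConvex (S i)) : MetricallyConvex (⋂ i, S i) :=
  fun x₁ h₁ x₂ h₂ z hz => mem_iInter.2 fun i =>
    h i x₁ (mem_iInter.1 h₁ i) x₂ (mem_iInter.1 h₂ i) z hz

namespace FourPointInequality

variable {T : Type*} [PseudoMetricSpace T]

lemma metricallyConvex_closedBall (hfour : FourPointInequality T) (t : T) (r : ℝ) :
    MetricallyConvex (closedBall t r) := by
  intro x₁ h₁ x₂ h₂ z hz
  rw [mem_closedBall] at h₁ h₂ ⊢
  rcases le_max_iff.1 (hfour z t x₁ x₂) with h | h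
  · linarith [dist_nonneg (x := z) (y := x₂), dist_comm x₁ z, dist_comm x₂ t]
  · linarith [dist_nonneg (x := x₁) (y := z), dist_comm x₁ t]

lemma dist_add_le_of_mem_closedBall (hfour : FourPointInequality T) {p y x x' : T} {S r r' : ℝ}
    (hyp : y ∈ closedBall p S) (hyx' : y ∈ closedBall x' r') (hpx : dist p x - r ≤ S)
    (hxx' : dist x x' ≤ r + r') :
    dist y x + (dist p x' - r') ≤ S + r := by
  rw [mem_closedBall] at hyp hyx'
  have hmax : max (dist y p + dist x x') (dist y x' + dist x p) ≤ S + r + r' :=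
    max_le (by linarith) (by linarith [dist_comm x p])
  linarith [hfour y x p x']

end FourPointInequality

namespace Hyperconvex

variable {T : Type u} [MetricSpace T] {ι : Type w} {x : ι → T} {r : ι → ℝ}

lemma nonempty_iInter_closedBall_of_small [Small.{v} ι] (hT : Hyperconvex.{u, v} T)
    (h : ∀ i j, dist (x i) (x j) ≤ r i + r j) :
    (⋂ i, closedBall (x i) (r i)).Nonempty := by
  have hr (i : ι) : 0 ≤ r i := by linarith [h i i, dist_self (x i)]
  let e := (equivShrink.{v} ι).symm
  rw [← e.surjective.iInter_comp]
  exact hT (Shrink.{v} ι) (x ∘ e) (r ∘ e) (fun i => hr (e i)) fun i j => h (e i) (e j)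

lemma nonempty_closedBall_inter_iInter_of_small [Small.{v} ι] (hT : Hyperconvex.{u, v} T)
    {p : T} {S : ℝ} (hS : 0 ≤ S) (hp : ∀ i, dist p (x i) ≤ S + r i)
    (h : ∀ i j, dist (x i) (x j) ≤ r i + r j) :
    (closedBall p S ∩ ⋂ i, closedBall (x i) (r i)).Nonempty := by
  have hcompat (k l : Option ι) :
      dist (k.elim p x) (l.elim p x) ≤ k.elim S r + l.elim S r := by
    rcases k with _ | i <;> rcases l with _ | j
    · simpa using hS
    · exact hp j
    · simpa only [Option.elim, dist_comm, add_comm] using hp i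
    · exact h i j
  have : Small.{v} (Option ι) := small_map (Equiv.optionEquivSumPUnit.{0} ι)
  simpa only [iInter_option, Option.elim] using hT.nonempty_iInter_closedBall_of_small hcompat

theorem nonempty_iInter_closedBall (hT : Hyperconvex.{u, v} T) (hfour : FourPointInequality T)
    (h : ∀ i j, dist (x i) (x j) ≤ r i + r j) :
    (⋂ i, closedBall (x i) (r i)).Nonempty := by
  rcases isEmpty_or_nonempty ι with hι | ⟨⟨i₀⟩⟩
  · exact hT.nonempty_iInter_closedBall_of_small h
  let p := x i₀
  let excess (i : ι) : ℝ := dist p (x i) - r i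
  have hbdd : BddAbove (range excess) :=
    ⟨r i₀, forall_mem_range.2 fun i => sub_le_iff_le_add.2 (h i₀ i)⟩
  obtain ⟨s, -, hlim, hs⟩ := exists_seq_tendsto_sSup ⟨excess i₀, mem_range_self i₀⟩ hbdd
  choose idx hidx using hs
  set S := sSup (range excess)
  have hle (i : ι) : excess i ≤ S := le_csSup hbdd (mem_range_self i)
  rcases lt_or_ge S 0 with hneg | hpos
  · refine ⟨p, mem_iInter.2 fun i => mem_closedBall.2 ?_⟩
    exact sub_nonpos.1 ((hle i).trans hneg.le)
  obtain ⟨y, hyp, hyballs⟩ := hT.nonempty_closedBall_inter_iInter_of_small hpos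
    (fun n => sub_le_iff_le_add.1 (hle (idx n))) fun m n => h (idx m) (idx n)
  refine ⟨y, mem_iInter.2 fun i => mem_closedBall.2 ?_⟩
  have hbound (n : ℕ) : dist y (x i) + s n ≤ S + r i :=
    hidx n ▸ hfour.dist_add_le_of_mem_closedBall hyp (mem_iInter.1 hyballs n) (hle i) (h i (idx n))
  linarith [le_of_tendsto' (hlim.const_add (dist y (x i))) hbound]

end Hyperconvex

/-- `M` is the graph of a `K`-Lipschitz partial map from `X` to `T`. Partial maps are encoded by
their graphs so that Zorn's lemma applies to inclusion; for metric `T` the inequality forces `M` to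
be single-valued. -/
def IsLipschitzGraph {X T : Type*} [PseudoMetricSpace X] [PseudoMetricSpace T] (K : ℝ≥0)
    (M : Set (X × T)) : Prop :=
  M.Pairwise fun a b => dist a.2 b.2 ≤ K * dist a.1 b.1

namespace IsLipschitzGraph

section Pseudo

variable {X T : Type*} [PseudoMetricSpace X] [PseudoMetricSpace T] {K : ℝ≥0} {M : Set (X × T)}

lemma dist_le (hM : IsLipschitzGraph K M) {a b : X × T} (ha : a ∈ M) (hb : b ∈ M) :
    dist a.2 b.2 ≤ K * dist a.1 b.1 := by
  rcases eq_or_ne a b with rfl | hab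
  · simp
  · exact hM ha hb hab

protected lemma insert (hM : IsLipschitzGraph K M) {x : X} {t : T}
    (h : ∀ a ∈ M, dist t a.2 ≤ K * dist x a.1) :
    IsLipschitzGraph K (insert (x, t) M) :=
  Set.Pairwise.insert hM fun a ha _ =>
    ⟨h a ha, by simpa only [dist_comm] using h a ha⟩

lemma exists_maximal (hM : IsLipschitzGraph K M) :
    ∃ N, M ⊆ N ∧ Maximal (IsLipschitzGraph K) N :=
  zorn_subset_nonempty {N | IsLipschitzGraph K N}
    (fun c hc hchain _ => ⟨⋃₀ c, hchain.pairwise_sUnion.2 hc, fun _ => subset_sUnion_of_mem⟩) M hM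

end Pseudo

variable {X T : Type*} [PseudoMetricSpace X] [MetricSpace T] {K : ℝ≥0} {M : Set (X × T)}

lemma exists_insert (hM : IsLipschitzGraph K M) (hT : Hyperconvex T)
    (hfour : FourPointInequality T) (x : X) :
    ∃ t, IsLipschitzGraph K (insert (x, t) M) := by
  have hcompat (a b : M) : dist a.1.2 b.1.2 ≤ K * dist x a.1.1 + K * dist x b.1.1 :=
    calc dist a.1.2 b.1.2 ≤ K * dist a.1.1 b.1.1 := hM.dist_le a.2 b.2
      _ ≤ K * (dist x a.1.1 + dist x b.1.1) := by gcongr; exact dist_triangle_left _ _ _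
      _ = K * dist x a.1.1 + K * dist x b.1.1 := mul_add _ _ _
  obtain ⟨t, ht⟩ := hT.nonempty_iInter_closedBall hfour hcompat
  exact ⟨t, hM.insert fun a ha => mem_iInter.1 ht ⟨a, ha⟩⟩

theorem exists_lipschitzWith_extension (hM : IsLipschitzGraph K M) (hT : Hyperconvex T)
    (hfour : FourPointInequality T) :
    ∃ π : X → T, LipschitzWith K π ∧ ∀ a ∈ M, π a.1 = a.2 := by
  obtain ⟨N, hMN, hN⟩ := hM.exists_maximal
  have htotal (x : X) : ∃ t, (x, t) ∈ N := by
    obtain ⟨t, ht⟩ := hN.prop.exists_insert hT hfour x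
    exact ⟨t, hN.le_of_ge ht (subset_insert _ _) (mem_insert _ _)⟩
  choose π hπ using htotal
  refine ⟨π, .of_dist_le_mul fun x y => hN.prop.dist_le (hπ x) (hπ y), fun a ha => ?_⟩
  simpa using hN.prop.dist_le (hπ a.1) (hMN ha)

end IsLipschitzGraph

/-- The set of images of `x` under the `K`-Lipschitz retractions of `X` onto `J : T → X`; the
paper's `P(x)` is the case `K = 1`. -/
def retractionImages {T X : Type*} [PseudoMetricSpace T] [PseudoMetricSpace X] (K : ℝ≥0)
    (J : T → X) (x : X) : Set T :=
  {x₀ | ∃ π : X → T, LipschitzWith K π ∧ (∀ t : T, π (J t) = t) ∧ π x = x₀}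

section RetractionImages

variable {T X : Type*} [PseudoMetricSpace X] {K : ℝ≥0} {J : T → X} {x : X}

lemma antilipschitzWith_of_nonempty_retractionImages [PseudoMetricSpace T]
    (h : (retractionImages K J x).Nonempty) : AntilipschitzWith K J := by
  obtain ⟨_, π, hπ, hretract, -⟩ := h
  exact hπ.to_rightInverse hretract

lemma isLipschitzGraph_range_of_antilipschitzWith [PseudoMetricSpace T]
    (hJ : AntilipschitzWith K J) : IsLipschitzGraph K (range fun t => (J t, t)) := by
  rintro _ ⟨s, rfl⟩ _ ⟨t, rfl⟩ -
  exact hJ.le_mul_dist s t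

lemma retractionImages_subset_iInter_closedBall [PseudoMetricSpace T] :
    retractionImages K J x ⊆ ⋂ t, closedBall t (K * dist x (J t)) := by
  rintro _ ⟨π, hπ, hretract, rfl⟩
  refine mem_iInter.2 fun t => ?_
  simpa only [mem_closedBall, hretract] using hπ.dist_le_mul x (J t)

lemma iInter_closedBall_subset_retractionImages [MetricSpace T] (hT : Hyperconvex T)
    (hfour : FourPointInequality T) (hJ : AntilipschitzWith K J) :
    ⋂ t, closedBall t (K * dist x (J t)) ⊆ retractionImages K J x := by
  intro x₀ hx₀
  have hgraph : IsLipschitzGraph K (insert (x, x₀) (range fun t => (J t, t))) :=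
    (isLipschitzGraph_range_of_antilipschitzWith hJ).insert <|
      forall_mem_range.2 (mem_iInter.1 hx₀)
  obtain ⟨π, hπ, hext⟩ := hgraph.exists_lipschitzWith_extension hT hfour
  exact ⟨π, hπ, fun t => hext (J t, t) (.inr ⟨t, rfl⟩), hext (x, x₀) (.inl rfl)⟩

theorem retractionImages_eq_iInter_closedBall [MetricSpace T] (hT : Hyperconvex T)
    (hfour : FourPointInequality T) (hJ : AntilipschitzWith K J) :
    retractionImages K J x = ⋂ t, closedBall t (K * dist x (J t)) :=
  retractionImages_subset_iInter_closedBall.antisymm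
    (iInter_closedBall_subset_retractionImages hT hfour hJ)

end RetractionImages

theorem retraction_images_closed_and_convex_general {T X : Type*} [MetricSpace T]
    [PseudoMetricSpace X] (hT : Hyperconvex T) (hfour : FourPointInequality T) (K : ℝ≥0)
    (J : T → X) (x : X) :
    IsClosed (retractionImages K J x) ∧ MetricallyConvex (retractionImages K J x) := by
  rcases (retractionImages K J x).eq_empty_or_nonempty with hempty | hne
  · simp [hempty, MetricallyConvex]
  · rw [retractionImages_eq_iInter_closedBall hT hfour
      (antilipschitzWith_of_nonempty_retractionImages hne)]
    exact ⟨isClosed_iInter fun _ => isClosed_closedBall,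
      .iInter fun t => hfour.metricallyConvex_closedBall t _⟩

/-- Let `T` be a hyperconvex metric space satisfying the four-point
inequality (e.g. a complete metric tree), `J : T → X` an isometric embedding into a real
normed space, and `xt ∈ X`. Then the set `P(xt)` of images of `xt` under contractive
retractions `X → T` is closed and metrically convex. -/
theorem retraction_images_closed_and_convex {T X : Type*} [MetricSpace T]
    [NormedAddCommGroup X] [NormedSpace ℝ X]
    (hT : Hyperconvex T)
    (hfour : ∀ x₁ x₂ x₃ x₄ : T, dist x₁ x₂ + dist x₃ x₄ ≤
      max (dist x₁ x₃ + dist x₂ x₄) (dist x₁ x₄ + dist x₂ x₃))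
    (J : T → X) (hJ : Isometry J) (xt : X) :
    IsClosed {x₀ : T | ∃ π : X → T, LipschitzWith 1 π ∧
        (∀ t : T, π (J t) = t) ∧ π xt = x₀} ∧
    (∀ x₁ ∈ {x₀ : T | ∃ π : X → T, LipschitzWith 1 π ∧
        (∀ t : T, π (J t) = t) ∧ π xt = x₀},
      ∀ x₂ ∈ {x₀ : T | ∃ π : X → T, LipschitzWith 1 π ∧
        (∀ t : T, π (J t) = t) ∧ π xt = x₀},
      ∀ z : T, dist x₁ z + dist z x₂ = dist x₁ x₂ →
        z ∈ {x₀ : T | ∃ π : X → T, LipschitzWith 1 π ∧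
          (∀ t : T, π (J t) = t) ∧ π xt = x₀}) := by
  exact retraction_images_closed_and_convex_general hT hfour 1 J xt
end

section
/- Let T be a complete metric tree (complete geodesic metric space satisfying the four-point inequality), X a real normed space, J : T → X an isometric embedding, and A ⊆ T a nonempty bounded subset. Then the Kolmogorov diameters of the image of A converge to half the set measure of non-compactness of A: lim_{n→∞} δ_n(J(A), X) = α(A)/2, and likewise lim_{n→∞} δ_n^{(a)}(J(A), X) = α(A)/2. -/
open Filter

/-- The `n`-th Kolmogorov diameter of `A ⊆ X`: the infimum over linear subspaces `M`
of dimension at most `n` of `sup_{a ∈ A} dist(a, M)`. -/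
noncomputable def kolmogorovDiam {X : Type*} [NormedAddCommGroup X] [NormedSpace ℝ X]
    (A : Set X) (n : ℕ) : ℝ :=
  sInf {r : ℝ | ∃ M : Submodule ℝ X, Module.rank ℝ M ≤ n ∧
    r = ⨆ a : A, Metric.infDist (a : X) (M : Set X)}

/-- The `n`-th affine Kolmogorov diameter of `A ⊆ X`: the infimum over nonempty affine
subspaces `M` of dimension at most `n` of `sup_{a ∈ A} dist(a, M)`. -/
noncomputable def affineKolmogorovDiam {X : Type*} [NormedAddCommGroup X]
    [NormedSpace ℝ X] (A : Set X) (n : ℕ) : ℝ :=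
  sInf {r : ℝ | ∃ M : AffineSubspace ℝ X, (M : Set X).Nonempty ∧
    Module.rank ℝ M.direction ≤ n ∧
    r = ⨆ a : A, Metric.infDist (a : X) (M : Set X)}

/-- The set (Kuratowski) measure of non-compactness of `A`: the infimum of the `a > 0`
such that `A` is covered by finitely many subsets of `A` each of diameter at most `a`. -/
noncomputable def setMeasureNoncompact {M : Type*} [MetricSpace M] (A : Set M) : ℝ :=
  sInf {a : ℝ | 0 < a ∧ ∃ (n : ℕ) (U : Fin n → Set M), (∀ i, U i ⊆ A) ∧
    (∀ i, ∀ x ∈ U i, ∀ y ∈ U i, dist x y ≤ a) ∧ A ⊆ ⋃ i, U i}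

/-!
The ball measure of non-compactness `χ(B)` of a bounded set `B` in a normed space is the limit of
both kinds of Kolmogorov diameters. The span of the centres of a finite cover of `B` by balls of
radius `r` is within `r` of `B`; conversely, if `B` is within `r` of a finite-dimensional affine
subspace, then it is within `r` of a bounded, hence totally bounded, part of it, and a finite
`ε`-net of that part yields a cover of `B` by balls of radius `r + ε`.

It remains to see that `χ(J(A)) = α(A) / 2`. The inequality `α(A) ≤ 2 χ(J(A))` holds in every
metric space, because a ball of radius `r` has diameter at most `2 r`. In a tree, a set of diameter
`D` lies in a ball of radius barely larger than `D / 2`: the four-point inequality shows that the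
midpoint of an almost diametral pair is a suitable centre. Hence `χ(J(A)) ≤ χ(A) ≤ α(A) / 2`.
-/

open Metric Bornology

/-- The ball (Hausdorff) measure of non-compactness of `A`: the infimum of the `r > 0` such that
`A` is covered by finitely many closed balls of radius `r`. The centres range over the ambient
space and need not lie in `A`. -/
noncomputable def ballMeasureNoncompact {M : Type*} [PseudoMetricSpace M] (A : Set M) : ℝ :=
  sInf {r : ℝ | 0 < r ∧ ∃ t : Finset M, A ⊆ ⋃ c ∈ t, closedBall c r}

/-- Every nonempty bounded set of diameter `D` lies in a closed ball of radius `r`, for each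
`r > D / 2`; in other words, its Chebyshev radius is at most half its diameter. Metric trees and
hyperconvex spaces have this property, which bounds the ball measure of non-compactness by half the
set measure. -/
def HasHalfDiamCenters (T : Type*) [PseudoMetricSpace T] : Prop :=
  ∀ U : Set T, U.Nonempty → IsBounded U → ∀ r, diam U / 2 < r → ∃ c, U ⊆ closedBall c r

section BallMeasure

variable {M : Type*} [PseudoMetricSpace M] {A K : Set M} {r : ℝ}

lemma ballMeasureNoncompact_nonneg (A : Set M) : 0 ≤ ballMeasureNoncompact A :=
  Real.sInf_nonneg fun _ hr => hr.1.le

lemma ballMeasureNoncompact_le (hr : 0 < r) (t : Finset M) (hA : A ⊆ ⋃ c ∈ t, closedBall c r) :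
    ballMeasureNoncompact A ≤ r :=
  csInf_le ⟨0, fun _ hs => hs.1.le⟩ ⟨hr, t, hA⟩

lemma exists_cover_closedBall_of_ballMeasureNoncompact_lt [Nonempty M] (hA : IsBounded A)
    (hr : ballMeasureNoncompact A < r) : ∃ t : Finset M, A ⊆ ⋃ c ∈ t, closedBall c r := by
  obtain ⟨R, hR_pos, hAR⟩ := hA.subset_closedBall_lt 0 (Classical.arbitrary M)
  have hradii : {r : ℝ | 0 < r ∧ ∃ t : Finset M, A ⊆ ⋃ c ∈ t, closedBall c r}.Nonempty :=
    ⟨R, hR_pos, {Classical.arbitrary M}, by simpa using hAR⟩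
  obtain ⟨s, ⟨-, t, hAt⟩, hsr⟩ := exists_lt_of_csInf_lt hradii hr
  exact ⟨t, hAt.trans (Set.iUnion₂_mono fun c _ => closedBall_subset_closedBall hsr.le)⟩

lemma ballMeasureNoncompact_le_of_totallyBounded (hK : TotallyBounded K) (hr : 0 ≤ r)
    (hAK : ∀ x ∈ A, ∃ y ∈ K, dist x y ≤ r) : ballMeasureNoncompact A ≤ r := by
  refine le_of_forall_pos_le_add fun ε hε => ?_
  obtain ⟨t, -, ht_fin, hKt⟩ := finite_approx_of_totallyBounded hK ε hε
  refine ballMeasureNoncompact_le (by positivity) ht_fin.toFinset fun x hx => ?_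
  obtain ⟨y, hyK, hxy⟩ := hAK x hx
  obtain ⟨c, hct, hyc⟩ := Set.mem_iUnion₂.1 (hKt hyK)
  refine Set.mem_iUnion₂.2 ⟨c, ht_fin.mem_toFinset.2 hct, ?_⟩
  exact (dist_triangle x y c).trans (add_le_add hxy hyc.le)

lemma infDist_le_iSup_infDist (hA : IsBounded A) {S : Set M} (hS : S.Nonempty) {x : M}
    (hx : x ∈ A) : infDist x S ≤ ⨆ a : A, infDist (a : M) S := by
  obtain ⟨p, hp⟩ := hS
  obtain ⟨R, hR⟩ := hA.subset_closedBall p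
  have hbdd : BddAbove (Set.range fun a : A => infDist (a : M) S) :=
    ⟨R, Set.forall_mem_range.2 fun a => (infDist_le_dist_of_mem hp).trans (hR a.2)⟩
  exact le_ciSup hbdd ⟨x, hx⟩

lemma ballMeasureNoncompact_le_iSup_infDist (hA : IsBounded A) {S : Set M} [ProperSpace S]
    (hS : S.Nonempty) : ballMeasureNoncompact A ≤ ⨆ a : A, infDist (a : M) S := by
  refine le_of_forall_gt_imp_ge_of_dense fun s hs => ?_
  have hs_nonneg : 0 ≤ s := (Real.iSup_nonneg fun _ => infDist_nonneg).trans hs.le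
  obtain ⟨p, hp⟩ := hS
  obtain ⟨R, hR⟩ := hA.subset_closedBall p
  have hK : TotallyBounded (Subtype.val '' closedBall (⟨p, hp⟩ : S) (s + R)) :=
    ((isCompact_closedBall _ _).image continuous_subtype_val).totallyBounded
  refine ballMeasureNoncompact_le_of_totallyBounded hK hs_nonneg fun x hx => ?_
  obtain ⟨y, hyS, hxy⟩ := (infDist_lt_iff ⟨p, hp⟩).1
    ((infDist_le_iSup_infDist hA ⟨p, hp⟩ hx).trans_lt hs)
  refine ⟨y, ⟨⟨y, hyS⟩, ?_, rfl⟩, hxy.le⟩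
  exact (dist_triangle_left y p x).trans (add_le_add hxy.le (hR hx))

lemma ballMeasureNoncompact_image_le {N : Type*} [PseudoMetricSpace N] [Nonempty M] {f : M → N}
    (hf : LipschitzWith 1 f) (hA : IsBounded A) :
    ballMeasureNoncompact (f '' A) ≤ ballMeasureNoncompact A := by
  classical
  refine le_of_forall_gt_imp_ge_of_dense fun r hr => ?_
  obtain ⟨t, hAt⟩ := exists_cover_closedBall_of_ballMeasureNoncompact_lt hA hr
  refine ballMeasureNoncompact_le ((ballMeasureNoncompact_nonneg A).trans_lt hr) (t.image f) ?_
  rintro _ ⟨x, hx, rfl⟩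
  obtain ⟨c, hct, hxc⟩ := Set.mem_iUnion₂.1 (hAt hx)
  refine Set.mem_iUnion₂.2 ⟨f c, Finset.mem_image_of_mem f hct, ?_⟩
  calc dist (f x) (f c) ≤ dist x c := by simpa using hf.dist_le_mul x c
    _ ≤ r := hxc

end BallMeasure

section SetMeasure

variable {M : Type*} [MetricSpace M] {A : Set M} {r : ℝ}

lemma setMeasureNoncompact_le {ι : Type*} [Finite ι] (hr : 0 < r) (U : ι → Set M)
    (hUA : ∀ i, U i ⊆ A) (hU : ∀ i, ∀ x ∈ U i, ∀ y ∈ U i, dist x y ≤ r) (hA : A ⊆ ⋃ i, U i) :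
    setMeasureNoncompact A ≤ r := by
  obtain ⟨n, ⟨e⟩⟩ := Finite.exists_equiv_fin ι
  refine csInf_le ⟨0, fun _ hs => hs.1.le⟩
    ⟨hr, n, fun i => U (e.symm i), fun i => hUA _, fun i => hU _, ?_⟩
  rwa [e.symm.surjective.iUnion_comp]

lemma exists_cover_of_setMeasureNoncompact_lt (hA : IsBounded A)
    (hr : setMeasureNoncompact A < r) :
    ∃ (n : ℕ) (U : Fin n → Set M), (∀ i, IsBounded (U i)) ∧ (∀ i, diam (U i) < r) ∧
      A ⊆ ⋃ i, U i := by
  obtain ⟨C, hC⟩ := isBounded_iff.1 hA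
  have hA_cover : A ⊆ ⋃ _ : Fin 1, A := (Set.iUnion_const A).ge
  have hdiams : {a : ℝ | 0 < a ∧ ∃ (n : ℕ) (U : Fin n → Set M), (∀ i, U i ⊆ A) ∧
      (∀ i, ∀ x ∈ U i, ∀ y ∈ U i, dist x y ≤ a) ∧ A ⊆ ⋃ i, U i}.Nonempty :=
    ⟨max C 1, by positivity, 1, fun _ => A, fun _ => le_rfl,
      fun _ x hx y hy => (hC hx hy).trans (le_max_left C 1), hA_cover⟩
  obtain ⟨a, ⟨ha, n, U, hUA, hU, hAU⟩, har⟩ := exists_lt_of_csInf_lt hdiams hr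
  exact ⟨n, U, fun i => hA.subset (hUA i),
    fun i => (diam_le_of_forall_dist_le ha.le (hU i)).trans_lt har, hAU⟩

lemma setMeasureNoncompact_le_two_mul_ballMeasureNoncompact_image {N : Type*}
    [PseudoMetricSpace N] [Nonempty N] {f : M → N} (hf : AntilipschitzWith 1 f)
    (hA : IsBounded (f '' A)) :
    setMeasureNoncompact A ≤ 2 * ballMeasureNoncompact (f '' A) := by
  suffices setMeasureNoncompact A / 2 ≤ ballMeasureNoncompact (f '' A) by linarith
  refine le_of_forall_gt_imp_ge_of_dense fun r hr => ?_
  have hr_pos : 0 < r := (ballMeasureNoncompact_nonneg _).trans_lt hr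
  obtain ⟨t, hAt⟩ := exists_cover_closedBall_of_ballMeasureNoncompact_lt hA hr
  suffices setMeasureNoncompact A ≤ 2 * r by linarith
  refine setMeasureNoncompact_le (by positivity)
    (fun c : t => A ∩ f ⁻¹' closedBall (c : N) r) (fun c => Set.inter_subset_left) ?_ ?_
  · rintro c x ⟨-, hx⟩ y ⟨-, hy⟩
    calc dist x y ≤ dist (f x) (f y) := by simpa using hf.le_mul_dist x y
      _ ≤ dist (f x) c + dist (f y) c := dist_triangle_right _ _ _
      _ ≤ 2 * r := by linarith [mem_closedBall.1 hx, mem_closedBall.1 hy]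
  · intro x hx
    obtain ⟨c, hct, hxc⟩ := Set.mem_iUnion₂.1 (hAt (Set.mem_image_of_mem f hx))
    exact Set.mem_iUnion.2 ⟨⟨c, hct⟩, hx, hxc⟩

lemma ballMeasureNoncompact_le_half_setMeasureNoncompact [Nonempty M] (hM : HasHalfDiamCenters M)
    (hA : IsBounded A) : ballMeasureNoncompact A ≤ setMeasureNoncompact A / 2 := by
  classical
  refine le_of_forall_gt_imp_ge_of_dense fun r hr => ?_
  obtain ⟨n, U, hU_bdd, hU_diam, hAU⟩ :=
    exists_cover_of_setMeasureNoncompact_lt hA (show setMeasureNoncompact A < 2 * r by linarith)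
  have hr_pos : 0 < r := by
    have hα : 0 ≤ setMeasureNoncompact A := Real.sInf_nonneg fun _ hs => hs.1.le
    linarith
  have hcenter : ∀ i, ∃ c, U i ⊆ closedBall c r := fun i => by
    rcases (U i).eq_empty_or_nonempty with hU | hU
    · exact ⟨Classical.arbitrary M, hU ▸ Set.empty_subset _⟩
    · exact hM (U i) hU (hU_bdd i) r (by linarith [hU_diam i])
  choose c hc using hcenter
  refine ballMeasureNoncompact_le hr_pos (Finset.univ.image c) fun x hx => ?_
  obtain ⟨i, hi⟩ := Set.mem_iUnion.1 (hAU hx)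
  exact Set.mem_iUnion₂.2 ⟨c i, Finset.mem_image_of_mem c (Finset.mem_univ i), hc i hi⟩

lemma ballMeasureNoncompact_image_eq_half_setMeasureNoncompact {N : Type*} [PseudoMetricSpace N]
    (hM : HasHalfDiamCenters M) {f : M → N} (hf : Isometry f) (hA_ne : A.Nonempty)
    (hA : IsBounded A) : ballMeasureNoncompact (f '' A) = setMeasureNoncompact A / 2 := by
  have : Nonempty M := hA_ne.nonempty
  have : Nonempty N := this.map f
  refine le_antisymm ?_ ?_
  · exact (ballMeasureNoncompact_image_le hf.lipschitz hA).trans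
      (ballMeasureNoncompact_le_half_setMeasureNoncompact hM hA)
  · linarith [setMeasureNoncompact_le_two_mul_ballMeasureNoncompact_image hf.antilipschitz
      (hf.lipschitz.isBounded_image hA)]

end SetMeasure

section Tree

variable {T : Type*} [PseudoMetricSpace T]

lemma exists_midpoint_of_exists_geodesic {x y : T}
    (hgeo : ∃ γ : ℝ → T, γ 0 = x ∧ γ (dist x y) = y ∧
      ∀ s ∈ Set.Icc (0 : ℝ) (dist x y), ∀ t ∈ Set.Icc (0 : ℝ) (dist x y),
        dist (γ s) (γ t) = |s - t|) :
    ∃ m, dist m x ≤ dist x y / 2 ∧ dist m y ≤ dist x y / 2 := by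
  obtain ⟨γ, hγ_zero, hγ_dist, hγ⟩ := hgeo
  have hd : 0 ≤ dist x y := dist_nonneg
  have hhalf : dist x y / 2 ∈ Set.Icc 0 (dist x y) := ⟨by linarith, by linarith⟩
  have hx := hγ _ hhalf 0 ⟨le_rfl, hd⟩
  have hy := hγ _ hhalf (dist x y) ⟨hd, le_rfl⟩
  rw [hγ_zero, sub_zero, abs_of_nonneg hhalf.1] at hx
  rw [hγ_dist, abs_of_nonpos (by linarith)] at hy
  exact ⟨γ (dist x y / 2), hx.le, by linarith⟩

lemma exists_lt_dist_of_lt_diam {U : Set T} (hU : U.Nonempty) {s : ℝ} (hs : s < diam U) :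
    ∃ x ∈ U, ∃ y ∈ U, s < dist x y := by
  contrapose! hs
  exact diam_le_of_forall_dist_le_of_nonempty hU hs

lemma hasHalfDiamCenters_of_midpoints_of_fourPoint
    (hmid : ∀ x y : T, ∃ m, dist m x ≤ dist x y / 2 ∧ dist m y ≤ dist x y / 2)
    (hfour : ∀ x₁ x₂ x₃ x₄ : T, dist x₁ x₂ + dist x₃ x₄ ≤
      max (dist x₁ x₃ + dist x₂ x₄) (dist x₁ x₄ + dist x₂ x₃)) :
    HasHalfDiamCenters T := by
  intro U hU hU_bdd r hr
  obtain ⟨x, hx, y, hy, hxy⟩ :=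
    exists_lt_dist_of_lt_diam hU (show 2 * (diam U - r) < diam U by linarith)
  obtain ⟨m, hmx, hmy⟩ := hmid x y
  refine ⟨m, fun z hz => ?_⟩
  have hzx : dist z x ≤ diam U := dist_le_diam_of_mem hU_bdd hz hx
  have hzy : dist z y ≤ diam U := dist_le_diam_of_mem hU_bdd hz hy
  have hz_sum : dist z m + dist x y ≤ diam U + dist x y / 2 :=
    (hfour z m x y).trans (max_le (add_le_add hzx hmy) (add_le_add hzy hmx))
  rw [mem_closedBall]
  linarith

end Tree

section Kolmogorov

variable {X : Type*} [NormedAddCommGroup X] [NormedSpace ℝ X] {B : Set X} {n : ℕ}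

lemma kolmogorovDiam_le {r : ℝ} (hr : 0 ≤ r) {M : Submodule ℝ X} (hM : Module.rank ℝ M ≤ n)
    (hBM : ∀ b ∈ B, infDist b (M : Set X) ≤ r) : kolmogorovDiam B n ≤ r := by
  have hbdd : BddBelow {s : ℝ | ∃ M : Submodule ℝ X, Module.rank ℝ M ≤ n ∧
      s = ⨆ b : B, infDist (b : X) (M : Set X)} := by
    refine ⟨0, ?_⟩
    rintro _ ⟨M, -, rfl⟩
    exact Real.iSup_nonneg fun _ => infDist_nonneg
  exact (csInf_le hbdd ⟨M, hM, rfl⟩).trans (Real.iSup_le (fun b => hBM b b.2) hr)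

lemma kolmogorovDiam_le_of_cover_closedBall {r : ℝ} (hr : 0 ≤ r) {t : Finset X}
    (ht : t.card ≤ n) (hB : B ⊆ ⋃ c ∈ t, closedBall c r) : kolmogorovDiam B n ≤ r := by
  refine kolmogorovDiam_le hr (M := Submodule.span ℝ t)
    ((rank_span_finset_le t).trans (by exact_mod_cast ht)) fun b hb => ?_
  obtain ⟨c, hct, hbc⟩ := Set.mem_iUnion₂.1 (hB hb)
  exact (infDist_le_dist_of_mem (Submodule.subset_span hct)).trans hbc

lemma affineKolmogorovDiam_le_kolmogorovDiam (B : Set X) (n : ℕ) :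
    affineKolmogorovDiam B n ≤ kolmogorovDiam B n := by
  refine csInf_le_csInf ⟨0, ?_⟩ ⟨_, ⊥, by simp, rfl⟩ ?_
  · rintro _ ⟨M, -, -, rfl⟩
    exact Real.iSup_nonneg fun _ => infDist_nonneg
  · rintro _ ⟨M, hM, rfl⟩
    exact ⟨M.toAffineSubspace, ⟨0, M.zero_mem⟩,
      by rwa [Submodule.toAffineSubspace_direction], rfl⟩

lemma properSpace_of_normedAddTorsor (V : Type*) {P : Type*} [NormedAddCommGroup V]
    [PseudoMetricSpace P] [NormedAddTorsor V P] [ProperSpace V] : ProperSpace P := by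
  let e := IsometryEquiv.vaddConst (V := V) (Classical.arbitrary P)
  exact e.isometry.antilipschitz.properSpace e.continuous e.surjective

lemma ballMeasureNoncompact_le_affineKolmogorovDiam (hB : IsBounded B) (n : ℕ) :
    ballMeasureNoncompact B ≤ affineKolmogorovDiam B n := by
  refine le_csInf ⟨_, (⊥ : Submodule ℝ X).toAffineSubspace, ⟨0, (⊥ : Submodule ℝ X).zero_mem⟩,
    by rw [Submodule.toAffineSubspace_direction]; simp, rfl⟩ ?_
  rintro _ ⟨M, hM_ne, hM_rank, rfl⟩
  have : Nonempty M := hM_ne.to_subtype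
  have : FiniteDimensional ℝ M.direction :=
    Module.rank_lt_aleph0_iff.1 (hM_rank.trans_lt Cardinal.natCast_lt_aleph0)
  have : ProperSpace M.direction := FiniteDimensional.proper ℝ _
  have : ProperSpace (M : Set X) := properSpace_of_normedAddTorsor M.direction (P := M)
  exact ballMeasureNoncompact_le_iSup_infDist hB hM_ne

lemma eventually_kolmogorovDiam_lt (hB : IsBounded B) {r : ℝ} (hr : ballMeasureNoncompact B < r) :
    ∀ᶠ n in atTop, kolmogorovDiam B n < r := by
  obtain ⟨s, hs, hsr⟩ := exists_between hr
  have hs_nonneg : 0 ≤ s := (ballMeasureNoncompact_nonneg B).trans hs.le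
  obtain ⟨t, hBt⟩ := exists_cover_closedBall_of_ballMeasureNoncompact_lt hB hs
  filter_upwards [eventually_ge_atTop t.card] with n hn
  exact (kolmogorovDiam_le_of_cover_closedBall hs_nonneg hn hBt).trans_lt hsr

theorem tendsto_kolmogorovDiam (hB : IsBounded B) :
    Tendsto (kolmogorovDiam B) atTop (nhds (ballMeasureNoncompact B)) := by
  refine tendsto_order.2 ⟨fun r hr => .of_forall fun n => ?_,
    fun r hr => eventually_kolmogorovDiam_lt hB hr⟩
  exact hr.trans_le ((ballMeasureNoncompact_le_affineKolmogorovDiam hB n).trans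
    (affineKolmogorovDiam_le_kolmogorovDiam B n))

theorem tendsto_affineKolmogorovDiam (hB : IsBounded B) :
    Tendsto (affineKolmogorovDiam B) atTop (nhds (ballMeasureNoncompact B)) :=
  tendsto_of_tendsto_of_tendsto_of_le_of_le tendsto_const_nhds (tendsto_kolmogorovDiam hB)
    (ballMeasureNoncompact_le_affineKolmogorovDiam hB) (affineKolmogorovDiam_le_kolmogorovDiam B)

end Kolmogorov

theorem tree_kolmogorov_diam_limit_general {T X : Type*} [MetricSpace T]
    [NormedAddCommGroup X] [NormedSpace ℝ X] (hT : HasHalfDiamCenters T)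
    {J : T → X} (hJ : Isometry J) {A : Set T} (hA : A.Nonempty) (hAb : IsBounded A) :
    Tendsto (fun n => kolmogorovDiam (J '' A) n) atTop
      (nhds (setMeasureNoncompact A / 2)) ∧
    Tendsto (fun n => affineKolmogorovDiam (J '' A) n) atTop
      (nhds (setMeasureNoncompact A / 2)) := by
  have hJA : IsBounded (J '' A) := hJ.lipschitz.isBounded_image hAb
  rw [← ballMeasureNoncompact_image_eq_half_setMeasureNoncompact hT hJ hA hAb]
  exact ⟨tendsto_kolmogorovDiam hJA, tendsto_affineKolmogorovDiam hJA⟩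

/-- Let `T` be a complete metric tree (complete geodesic metric space
satisfying the four-point inequality) isometrically embedded (via `J`) in a real normed
space `X`, and let `A ⊆ T` be nonempty and bounded. Then the (affine) Kolmogorov
diameters of `J(A)` converge to `α(A)/2`, half the set measure of non-compactness. -/
theorem tree_kolmogorov_diam_limit {T X : Type*} [MetricSpace T] [CompleteSpace T]
    [NormedAddCommGroup X] [NormedSpace ℝ X]
    (hgeo : ∀ x y : T, ∃ γ : ℝ → T, γ 0 = x ∧ γ (dist x y) = y ∧
      ∀ s ∈ Set.Icc (0 : ℝ) (dist x y), ∀ t ∈ Set.Icc (0 : ℝ) (dist x y),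
        dist (γ s) (γ t) = |s - t|)
    (hfour : ∀ x₁ x₂ x₃ x₄ : T, dist x₁ x₂ + dist x₃ x₄ ≤
      max (dist x₁ x₃ + dist x₂ x₄) (dist x₁ x₄ + dist x₂ x₃))
    (J : T → X) (hJ : Isometry J)
    (A : Set T) (hA : A.Nonempty) (hAb : Bornology.IsBounded A) :
    Tendsto (fun n => kolmogorovDiam (J '' A) n) atTop
      (nhds (setMeasureNoncompact A / 2)) ∧
    Tendsto (fun n => affineKolmogorovDiam (J '' A) n) atTop
      (nhds (setMeasureNoncompact A / 2)) :=
  tree_kolmogorov_diam_limit_general (hasHalfDiamCenters_of_midpoints_of_fourPoint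
    (fun x y => exists_midpoint_of_exists_geodesic (hgeo x y)) hfour) hJ hA hAb
end
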